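/- Let k ≥ 1, n ≥ 1 and N ≥ n be integers. If Ψ ∈ J_k^o(n,N) and γ_1, γ_2 ∈ J_k^{reg}(1,n) satisfy Ψ ∘ γ_1 = 0 and Ψ ∘ γ_2 = 0, then there exists φ ∈ J_k^{reg}(1,1) such that γ_1 = γ_2 ∘ φ. -/

import Mathlib

open scoped BigOperators

namespace JetPaper

/-- Monomials in `u` variables of degree between `1` and `k`:
these index a basis of `⊕_{j=1}^k Sym^j ℂ^u`. -/
def Mon (u k : ℕ) : Type := {m : Fin u → ℕ // 0 < ∑ i, m i ∧ ∑ i, m i ≤ k}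

noncomputable instance (u k : ℕ) : Fintype (Mon u k) :=
  Fintype.ofInjective
    (fun m : Mon u k => (fun i => (⟨m.1 i, Nat.lt_succ_of_le
        ((Finset.single_le_sum (fun _ _ => Nat.zero_le _) (Finset.mem_univ i)).trans
          m.2.2)⟩ : Fin (k + 1))))
    (fun m m' h => Subtype.ext (funext fun i => congrArg Fin.val (congrFun h i)))

/-- The space `J_k(u,v)` of `k`-jets at the origin of holomorphic maps `(ℂ^u,0) → (ℂ^v,0)`,
described by the coefficients (indexed by monomials of degree `1,…,k` in `u` variables)
of the `v` coordinate polynomials. -/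
abbrev Jet (k u v : ℕ) : Type := Fin v → Mon u k → ℂ

/-- The tuple of coordinate polynomials of a jet. -/
noncomputable def toPoly {k u v : ℕ} (γ : Jet k u v) : Fin v → MvPolynomial (Fin u) ℂ :=
  fun i => ∑ m : Mon u k, MvPolynomial.monomial (Finsupp.equivFunOnFinite.symm m.1) (γ i m)

/-- Composition of jets `Ψ ∘ γ`: substitution of the coordinate polynomials of `γ` into
those of `Ψ`, followed by deletion of all terms of degree greater than `k`
(only the coefficients of monomials of degree `1,…,k` are recorded). -/
noncomputable def jetComp {k u v w : ℕ} (Ψ : Jet k v w) (γ : Jet k u v) : Jet k u w :=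
  fun i m => MvPolynomial.coeff (Finsupp.equivFunOnFinite.symm m.1)
    (MvPolynomial.aeval (toPoly γ) (toPoly Ψ i))

/-- The linear part of a jet, as a matrix. -/
noncomputable def linPart {k u v : ℕ} (γ : Jet k u v) : Matrix (Fin v) (Fin u) ℂ :=
  fun i j => MvPolynomial.coeff (Finsupp.single j 1) (toPoly γ i)

/-- The dimension of the kernel of the linear part of a jet. -/
noncomputable def kerDim {k n N : ℕ} (Ψ : Jet k n N) : ℕ :=
  Module.finrank ℂ (LinearMap.ker (Matrix.mulVecLin (linPart Ψ)))

/-! Choose `i` with `γ₂ᵢ'(0) ≠ 0`. The chain rule puts `γ₂'(0)` in the line `ker Ψ'`, so the jet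
`(xᵢ, Ψ)` has injective linear part and composing with it is injective. Since `γ₂ᵢ'(0) ≠ 0`, the
scalar equation `γ₂ᵢ ∘ φ = γ₁ᵢ` has a solution `φ`, and then `(xᵢ, Ψ)` sends both `γ₁` and `γ₂ ∘ φ`
to `(γ₁ᵢ, 0)`. Injectivity and solvability are the two halves of the inverse function theorem,
obtained order by order from the first-order Taylor expansion modulo powers of an ideal. -/

lemma exists_mul_eq_one_of_mulVec_injective {K m n : Type*} [Field K] [Fintype m] [Fintype n]
    [DecidableEq n] {A : Matrix m n K} (hA : Function.Injective A.mulVec) :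
    ∃ B : Matrix n m K, B * A = 1 := by
  classical
  rw [← Matrix.coe_mulVecLin, ← LinearMap.ker_eq_bot] at hA
  obtain ⟨g, hg⟩ := A.mulVecLin.exists_leftInverse_of_injective hA
  refine ⟨LinearMap.toMatrix' g, Matrix.toLin'.injective ?_⟩
  rw [Matrix.toLin'_mul, Matrix.toLin'_toMatrix', Matrix.toLin'_one]
  exact hg

section PolynomialMaps

open MvPolynomial Matrix

variable {σ ι R A : Type*} [CommSemiring R] [CommRing A] [Algebra R A] {I : Ideal A}

/-- The Jacobian matrix at the origin of a tuple of polynomials, read off from the linear terms. -/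
noncomputable def linearTerms (P : ι → MvPolynomial σ R) : Matrix ι σ R :=
  of fun l i => coeff (Finsupp.single i 1) (P l)

lemma aeval_sub_aeval_mem {a b : σ → A} (hab : ∀ i, a i - b i ∈ I) (p : MvPolynomial σ R) :
    aeval a p - aeval b p ∈ I := by
  have hmk : (fun i => Ideal.Quotient.mkₐ R I (a i)) = fun i => Ideal.Quotient.mkₐ R I (b i) :=
    funext fun i => Ideal.Quotient.eq.2 (hab i)
  rw [← Ideal.Quotient.eq, ← Ideal.Quotient.mkₐ_eq_mk R I, comp_aeval_apply, comp_aeval_apply,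
    hmk]

lemma aeval_sub_algebraMap_constantCoeff_mem {a : σ → A} (ha : ∀ i, a i ∈ I)
    (p : MvPolynomial σ R) : aeval a p - algebraMap R A (constantCoeff p) ∈ I := by
  simpa using aeval_sub_aeval_mem (a := a) (b := 0) (I := I) (by simpa using ha) p

lemma aeval_mem_pow {a : σ → A} (ha : ∀ i, a i ∈ I) {m : ℕ} {p : MvPolynomial σ R}
    (hp : p ∈ idealOfVars σ R ^ m) : aeval a p ∈ I ^ m := by
  have hle : (idealOfVars σ R).map (aeval a : MvPolynomial σ R →ₐ[R] A) ≤ I := by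
    rw [Ideal.map_span, Ideal.span_le]
    rintro _ ⟨_, ⟨i, rfl⟩, rfl⟩
    simpa using ha i
  have hmap := Ideal.mem_map_of_mem (aeval a : MvPolynomial σ R →ₐ[R] A) hp
  rw [Ideal.map_pow] at hmap
  exact Ideal.pow_right_mono hle m hmap

lemma coeff_single_one_mul_X [DecidableEq σ] (p : MvPolynomial σ R) (i j : σ) :
    coeff (Finsupp.single j 1) (p * X i) = if j = i then constantCoeff p else 0 := by
  rw [coeff_mul_X']
  by_cases hji : j = i
  · simp [hji, constantCoeff_eq]
  · simp [hji, Ne.symm hji]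

theorem aeval_sub_aeval_sub_linear_mem [Fintype σ] {m : ℕ} {a b : σ → A}
    (ha : ∀ i, a i ∈ I) (hb : ∀ i, b i ∈ I) (hab : ∀ i, a i - b i ∈ I ^ m)
    (p : MvPolynomial σ R) :
    aeval a p - aeval b p
      - ∑ i, algebraMap R A (coeff (Finsupp.single i 1) p) * (a i - b i) ∈ I ^ (m + 1) := by
  classical
  induction p using MvPolynomial.induction_on with
  | C c => simp [coeff_C, Finsupp.single_eq_zero, eq_comm]
  | add p q hp hq =>
    convert add_mem hp hq using 1
    simp only [map_add, coeff_add, add_mul, Finset.sum_add_distrib]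
    ring
  | mul_X p i _ =>
    have hsum : ∑ j, algebraMap R A (coeff (Finsupp.single j 1) (p * X i)) * (a j - b j)
        = algebraMap R A (constantCoeff p) * (a i - b i) := by
      simp [coeff_single_one_mul_X, apply_ite (algebraMap R A)]
    have hleft : (aeval a p - aeval b p) * a i ∈ I ^ (m + 1) :=
      pow_succ I m ▸ Ideal.mul_mem_mul (aeval_sub_aeval_mem hab p) (ha i)
    have hright : (aeval b p - algebraMap R A (constantCoeff p)) * (a i - b i) ∈ I ^ (m + 1) :=
      pow_succ' I m ▸ Ideal.mul_mem_mul (aeval_sub_algebraMap_constantCoeff_mem hb p) (hab i)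
    convert add_mem hleft hright using 1
    rw [hsum]
    simp only [map_mul, aeval_X]
    ring

lemma map_algebraMap_mulVec_mem [Fintype σ] (M : Matrix ι σ R) {d : σ → A}
    (hd : ∀ i, d i ∈ I) (l : ι) : (M.map (algebraMap R A) *ᵥ d) l ∈ I :=
  Ideal.sum_mem _ fun i _ => Ideal.mul_mem_left _ _ (hd i)

lemma map_algebraMap_mulVec_mulVec_of_mul_eq_one [Fintype σ] [Fintype ι] [DecidableEq σ]
    {M : Matrix σ ι R} {N : Matrix ι σ R} (h : M * N = 1) (d : σ → A) :
    M.map (algebraMap R A) *ᵥ (N.map (algebraMap R A) *ᵥ d) = d := by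
  rw [mulVec_mulVec, ← Matrix.map_mul, h, Matrix.map_one _ (map_zero _) (map_one _), one_mulVec]

variable {P : ι → MvPolynomial σ R} {B : Matrix σ ι R}

/-- A left inverse of the Jacobian turns the first-order expansion into a recursion: agreement of
`a` and `b` modulo `I ^ m` improves to agreement modulo `I ^ (m + 1)`. -/
theorem sub_mem_pow_of_aeval_sub_aeval_mem_pow [Finite σ] [Fintype ι] [DecidableEq σ]
    (hB : B * linearTerms P = 1) {a b : σ → A} (ha : ∀ i, a i ∈ I) (hb : ∀ i, b i ∈ I) {m : ℕ}
    (h : ∀ l, aeval a (P l) - aeval b (P l) ∈ I ^ m) (i : σ) : a i - b i ∈ I ^ m := by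
  cases nonempty_fintype σ
  induction m generalizing i with
  | zero => simp
  | succ m ih =>
    have hab : ∀ i, a i - b i ∈ I ^ m := ih fun l => Ideal.pow_le_pow_right m.le_succ (h l)
    have hlinear : ∀ l, ((linearTerms P).map (algebraMap R A) *ᵥ (a - b)) l ∈ I ^ (m + 1) :=
      fun l => (Submodule.sub_mem_iff_right _ (h l)).1
        (aeval_sub_aeval_sub_linear_mem ha hb hab (P l))
    have hmem := map_algebraMap_mulVec_mem B hlinear i
    rwa [map_algebraMap_mulVec_mulVec_of_mul_eq_one hB] at hmem

/-- Newton iteration with the constant matrix `B` in place of the inverse derivative. -/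
theorem exists_aeval_sub_mem_pow [Fintype σ] [Finite ι] [DecidableEq ι]
    (hB : linearTerms P * B = 1) (hP : ∀ l, constantCoeff (P l) = 0) {d : ι → A}
    (hd : ∀ l, d l ∈ I) (m : ℕ) :
    ∃ a : σ → A, (∀ i, a i ∈ I) ∧ ∀ l, aeval a (P l) - d l ∈ I ^ (m + 1) := by
  cases nonempty_fintype ι
  induction m with
  | zero => exact ⟨0, fun _ => I.zero_mem, fun l => by simpa [hP] using hd l⟩
  | succ m ih =>
    obtain ⟨a, ha, had⟩ := ih
    set r : ι → A := fun l => aeval a (P l) - d l with hr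
    set s : σ → A := B.map (algebraMap R A) *ᵥ r with hs
    have hsm : ∀ i, s i ∈ I ^ (m + 1) := map_algebraMap_mulVec_mem B had
    have has : ∀ i, (a - s) i ∈ I := fun i =>
      sub_mem (ha i) (Ideal.pow_le_self m.succ_ne_zero (hsm i))
    refine ⟨a - s, has, fun l => ?_⟩
    have hexpand := aeval_sub_aeval_sub_linear_mem has ha
      (by simpa using hsm : ∀ i, (a - s) i - a i ∈ I ^ (m + 1)) (P l)
    have hlinear : ∑ i, algebraMap R A (coeff (Finsupp.single i 1) (P l)) * ((a - s) i - a i)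
        = -r l := by
      rw [← congrFun (map_algebraMap_mulVec_mulVec_of_mul_eq_one hB r) l, ← hs]
      simp [linearTerms, mulVec, dotProduct]
    rw [hlinear, hr] at hexpand
    simpa using hexpand

end PolynomialMaps

section Jets

open MvPolynomial

variable {k u v w x : ℕ}

/-- The `k`-jet at the origin of a polynomial map: its terms of degree `1, …, k`. -/
noncomputable def jetOf (f : Fin v → MvPolynomial (Fin u) ℂ) : Jet k u v :=
  fun i m => coeff (Finsupp.equivFunOnFinite.symm m.1) (f i)

lemma coeff_toPoly (γ : Jet k u v) (i : Fin v) (d : Fin u →₀ ℕ) :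
    coeff d (toPoly γ i) = if h : 0 < ∑ j, d j ∧ ∑ j, d j ≤ k then γ i ⟨d, h⟩ else 0 := by
  simp only [toPoly, coeff_sum, coeff_monomial]
  split_ifs with h
  · refine (Finset.sum_eq_single ⟨d, h⟩ (fun m _ hm => if_neg fun e => hm ?_)
      fun hd => absurd (Finset.mem_univ _) hd).trans (if_pos (by ext; rfl))
    exact Subtype.ext ((Equiv.symm_apply_eq _).1 e)
  · refine Finset.sum_eq_zero fun m _ => if_neg ?_
    rintro rfl
    exact h m.2

lemma toPoly_mem_idealOfVars (γ : Jet k u v) (i : Fin v) :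
    toPoly γ i ∈ idealOfVars (Fin u) ℂ := by
  rw [← pow_one (idealOfVars (Fin u) ℂ), mem_pow_idealOfVars_iff']
  intro d hd
  rw [coeff_toPoly, dif_neg]
  rw [Finsupp.degree_eq_sum] at hd
  omega

lemma constantCoeff_toPoly (γ : Jet k u v) (i : Fin v) : constantCoeff (toPoly γ i) = 0 := by
  simp [constantCoeff_eq, coeff_toPoly]

lemma jetOf_toPoly (γ : Jet k u v) : jetOf (toPoly γ) = γ := by
  ext i m
  exact (coeff_toPoly γ i _).trans (dif_pos m.2)

lemma toPoly_jetOf_sub_mem {f : Fin v → MvPolynomial (Fin u) ℂ}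
    (hf : ∀ i, f i ∈ idealOfVars (Fin u) ℂ) (i : Fin v) :
    toPoly (jetOf f : Jet k u v) i - f i ∈ idealOfVars (Fin u) ℂ ^ (k + 1) := by
  rw [mem_pow_idealOfVars_iff']
  intro d hd
  have hconst : d.degree < 1 → coeff d (f i) = 0 :=
    (mem_pow_idealOfVars_iff' 1 (f i)).1 (by simpa using hf i) d
  rw [Finsupp.degree_eq_sum] at hd hconst
  rw [coeff_sub, coeff_toPoly, sub_eq_zero]
  split_ifs with h
  · simp [jetOf]
  · exact (hconst (by omega)).symm

lemma jetOf_eq_jetOf_of_sub_mem {f g : Fin v → MvPolynomial (Fin u) ℂ}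
    (h : ∀ i, f i - g i ∈ idealOfVars (Fin u) ℂ ^ (k + 1)) : (jetOf f : Jet k u v) = jetOf g := by
  ext i m
  refine sub_eq_zero.1 ((coeff_sub _ _ _ _).symm.trans ?_)
  refine (mem_pow_idealOfVars_iff' _ _).1 (h i) _ ?_
  simpa [Finsupp.degree_eq_sum, Nat.lt_succ_iff] using m.2.2

lemma aeval_toPoly_mem_idealOfVars (Ψ : Jet k v w) (γ : Jet k u v) (l : Fin w) :
    aeval (toPoly γ) (toPoly Ψ l) ∈ idealOfVars (Fin u) ℂ := by
  simpa [constantCoeff_toPoly] using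
    aeval_sub_algebraMap_constantCoeff_mem (toPoly_mem_idealOfVars γ) (toPoly Ψ l)

lemma toPoly_jetComp_sub_mem (Ψ : Jet k v w) (γ : Jet k u v) (l : Fin w) :
    toPoly (jetComp Ψ γ) l - aeval (toPoly γ) (toPoly Ψ l) ∈ idealOfVars (Fin u) ℂ ^ (k + 1) :=
  toPoly_jetOf_sub_mem (aeval_toPoly_mem_idealOfVars Ψ γ) l

lemma jetComp_jetOf {f : Fin w → MvPolynomial (Fin v) ℂ}
    (hf : ∀ l, f l ∈ idealOfVars (Fin v) ℂ) (γ : Jet k u v) :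
    jetComp (jetOf f) γ = jetOf fun l => aeval (toPoly γ) (f l) := by
  refine jetOf_eq_jetOf_of_sub_mem fun l => ?_
  rw [← map_sub]
  exact aeval_mem_pow (toPoly_mem_idealOfVars γ) (toPoly_jetOf_sub_mem hf l)

theorem jetComp_assoc (Θ : Jet k w x) (Ψ : Jet k v w) (γ : Jet k u v) :
    jetComp (jetComp Θ Ψ) γ = jetComp Θ (jetComp Ψ γ) := by
  refine (jetComp_jetOf (aeval_toPoly_mem_idealOfVars Θ Ψ) γ).trans ?_
  refine jetOf_eq_jetOf_of_sub_mem fun l => ?_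
  rw [comp_aeval_apply, ← neg_sub]
  exact neg_mem (aeval_sub_aeval_mem (toPoly_jetComp_sub_mem Ψ γ) (toPoly Θ l))

lemma jetComp_zero_left (γ : Jet k u v) : jetComp (0 : Jet k v w) γ = 0 := by
  ext l m
  simp [jetComp, toPoly]

lemma linPart_eq_zero_of_order_zero (γ : Jet 0 u v) : linPart γ = 0 := by
  ext i j
  simp [linPart, coeff_toPoly]

lemma order_pos_of_linPart_ne_zero {γ : Jet k u v} (hγ : linPart γ ≠ 0) : 0 < k := by
  rcases Nat.eq_zero_or_pos k with rfl | hk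
  · exact absurd (linPart_eq_zero_of_order_zero γ) hγ
  · exact hk

lemma linPart_jetOf (hk : 0 < k) (f : Fin v → MvPolynomial (Fin u) ℂ) :
    linPart (jetOf f : Jet k u v) = linearTerms f := by
  ext i j
  have hdeg : 0 < ∑ l, Finsupp.single j 1 l ∧ ∑ l, Finsupp.single j 1 l ≤ k := by
    simpa [← Finsupp.degree_eq_sum, Nat.one_le_iff_ne_zero, pos_iff_ne_zero] using hk
  refine (coeff_toPoly _ i _).trans ((dif_pos hdeg).trans ?_)
  simp [jetOf, linearTerms]

theorem linPart_jetComp (Ψ : Jet k v w) (γ : Jet k u v) :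
    linPart (jetComp Ψ γ) = linPart Ψ * linPart γ := by
  rcases Nat.eq_zero_or_pos k with rfl | hk
  · simp [linPart_eq_zero_of_order_zero]
  refine (linPart_jetOf hk _).trans ?_
  ext l j
  have hexpand := aeval_sub_aeval_sub_linear_mem (m := 1) (b := 0) (toPoly_mem_idealOfVars γ)
    (fun _ => Submodule.zero_mem _) (by simpa using toPoly_mem_idealOfVars γ) (toPoly Ψ l)
  rw [aeval_zero, constantCoeff_toPoly, map_zero, sub_zero] at hexpand
  have hcoeff := (mem_pow_idealOfVars_iff' _ _).1 hexpand (Finsupp.single j 1) (by simp)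
  simp only [Pi.zero_apply, sub_zero, algebraMap_eq, coeff_sub, coeff_sum, coeff_C_mul,
    sub_eq_zero] at hcoeff
  exact hcoeff

lemma linPart_zero : linPart (0 : Jet k u v) = 0 := by
  ext
  simp [linPart, toPoly]

theorem jetComp_injective {Ψ : Jet k v w} (hΨ : Function.Injective (linPart Ψ).mulVec) :
    Function.Injective (jetComp Ψ : Jet k u v → Jet k u w) := by
  obtain ⟨B, hB⟩ := exists_mul_eq_one_of_mulVec_injective hΨ
  intro γ δ h
  rw [← jetOf_toPoly γ, ← jetOf_toPoly δ]
  refine jetOf_eq_jetOf_of_sub_mem (sub_mem_pow_of_aeval_sub_aeval_mem_pow hB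
    (toPoly_mem_idealOfVars γ) (toPoly_mem_idealOfVars δ) fun l => ?_)
  have hγ := toPoly_jetComp_sub_mem Ψ γ l
  rw [h] at hγ
  simpa using sub_mem (toPoly_jetComp_sub_mem Ψ δ l) hγ

theorem jetComp_surjective {Ψ : Jet k v w} (hΨ : Function.Surjective (linPart Ψ).mulVec) :
    Function.Surjective (jetComp Ψ : Jet k u v → Jet k u w) := by
  obtain ⟨B, hB⟩ := Matrix.mulVec_surjective_iff_exists_right_inverse.1 hΨ
  intro δ
  obtain ⟨f, hf, hfδ⟩ := exists_aeval_sub_mem_pow hB (constantCoeff_toPoly Ψ)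
    (toPoly_mem_idealOfVars δ) k
  refine ⟨jetOf f, ?_⟩
  rw [← jetOf_toPoly δ]
  refine jetOf_eq_jetOf_of_sub_mem fun l => ?_
  simpa using add_mem (aeval_sub_aeval_mem (toPoly_jetOf_sub_mem hf) (toPoly Ψ l)) (hfδ l)

lemma exists_jetComp_apply_eq {γ : Jet k 1 v} {i : Fin v} (hi : linPart γ i 0 ≠ 0)
    (δ : Mon 1 k → ℂ) : ∃ φ : Jet k 1 1, jetComp γ φ i = δ := by
  have hsurj : Function.Surjective (linPart (fun _ => γ i : Jet k 1 1)).mulVec := by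
    rw [Matrix.mulVec_surjective_iff_isUnit, Matrix.isUnit_iff_isUnit_det, Matrix.det_fin_one]
    exact hi.isUnit
  obtain ⟨φ, hφ⟩ := jetComp_surjective hsurj fun _ => δ
  exact ⟨φ, congrFun hφ 0⟩

/-- The jet `(xᵢ, Ψ)`, with the `i`-th source coordinate prepended as an extra component. -/
noncomputable def consCoord (i : Fin v) (Ψ : Jet k v w) : Jet k v (w + 1) :=
  jetOf (Fin.cons (X i) (toPoly Ψ))

lemma jetComp_consCoord (i : Fin v) (Ψ : Jet k v w) (γ : Jet k u v) :
    jetComp (consCoord i Ψ) γ = Fin.cons (γ i) (jetComp Ψ γ) := by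
  have hmem : ∀ l, (Fin.cons (X i) (toPoly Ψ) : Fin (w + 1) → MvPolynomial (Fin v) ℂ) l
      ∈ idealOfVars (Fin v) ℂ :=
    Fin.cases (Ideal.subset_span ⟨i, rfl⟩) (toPoly_mem_idealOfVars Ψ)
  rw [consCoord, jetComp_jetOf hmem]
  funext l
  refine Fin.cases ?_ (fun _ => rfl) l
  refine Eq.trans (funext fun m => ?_) (congrFun (jetOf_toPoly γ) i)
  simp [jetOf]

lemma linPart_consCoord_mulVec (hk : 0 < k) (i : Fin v) (Ψ : Jet k v w) (y : Fin v → ℂ) :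
    (linPart (consCoord i Ψ)).mulVec y = Fin.cons (y i) ((linPart Ψ).mulVec y) := by
  rw [consCoord, linPart_jetOf hk]
  funext l
  refine Fin.cases ?_ (fun _ => rfl) l
  simp [Matrix.mulVec, dotProduct, linearTerms, coeff_single_X]

lemma linPart_consCoord_mulVec_injective (hk : 0 < k) {Ψ : Jet k v w} (hΨ : kerDim Ψ = 1)
    {y : Fin v → ℂ} (hy : (linPart Ψ).mulVec y = 0) {i : Fin v} (hyi : y i ≠ 0) :
    Function.Injective (linPart (consCoord i Ψ)).mulVec := by
  rw [← Matrix.coe_mulVecLin, ← LinearMap.ker_eq_bot, LinearMap.ker_eq_bot']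
  intro z hz
  rw [Matrix.mulVecLin_apply, linPart_consCoord_mulVec hk] at hz
  have hzi : z i = 0 := congrFun hz 0
  have hzΨ : (linPart Ψ).mulVec z = 0 := funext fun l => congrFun hz l.succ
  have hy0 : (⟨y, hy⟩ : LinearMap.ker (linPart Ψ).mulVecLin) ≠ 0 := fun h =>
    hyi (congrFun (congrArg Subtype.val h) i)
  obtain ⟨c, hc⟩ := (finrank_eq_one_iff_of_nonzero' _ hy0).1 hΨ ⟨z, hzΨ⟩
  have hcz : c • y = z := congrArg Subtype.val hc
  have hc0 : c = 0 := (mul_eq_zero.1 ((congrFun hcz i).trans hzi)).resolve_right hyi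
  rw [← hcz, hc0, zero_smul]

end Jets

theorem test_curve_uniqueness_general {k n N : ℕ} {Ψ : Jet k n N} (hΨ : kerDim Ψ = 1)
    {γ₁ γ₂ : Jet k 1 n} (hγ₂ : linPart γ₂ ≠ 0)
    (h₁ : jetComp Ψ γ₁ = 0) (h₂ : jetComp Ψ γ₂ = 0) :
    ∃ φ : Jet k 1 1, γ₁ = jetComp γ₂ φ := by
  have hk := order_pos_of_linPart_ne_zero hγ₂
  obtain ⟨i, hi⟩ : ∃ i, linPart γ₂ i 0 ≠ 0 := by
    by_contra! h
    exact hγ₂ (Matrix.ext fun i j => Subsingleton.elim 0 j ▸ h i)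
  have hker : (linPart Ψ).mulVec ((linPart γ₂).col 0) = 0 := by
    have hprod : linPart Ψ * linPart γ₂ = 0 := by rw [← linPart_jetComp, h₂, linPart_zero]
    exact funext fun l => congrFun (congrFun hprod l) 0
  obtain ⟨φ, hφ⟩ := exists_jetComp_apply_eq hi (γ₁ i)
  have hinj := jetComp_injective (u := 1) (linPart_consCoord_mulVec_injective hk hΨ hker hi)
  refine ⟨φ, hinj ?_⟩
  rw [jetComp_consCoord, jetComp_consCoord, ← jetComp_assoc, h₁, h₂, jetComp_zero_left]
  exact congrArg (Fin.cons · 0) hφ.symm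

/-- If `Ψ ∈ J_k^o(n,N)` and `γ₁, γ₂ ∈ J_k^{reg}(1,n)` satisfy
`Ψ ∘ γ₁ = 0` and `Ψ ∘ γ₂ = 0`, then there exists `φ ∈ J_k^{reg}(1,1)` with `γ₁ = γ₂ ∘ φ`. -/
theorem test_curve_uniqueness (k n N : ℕ) (hk : 1 ≤ k) (hn : 1 ≤ n) (hN : n ≤ N)
    (Ψ : Jet k n N) (hΨ : kerDim Ψ = 1)
    (γ₁ γ₂ : Jet k 1 n) (hγ₁ : linPart γ₁ ≠ 0) (hγ₂ : linPart γ₂ ≠ 0)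
    (h₁ : jetComp Ψ γ₁ = 0) (h₂ : jetComp Ψ γ₂ = 0) :
    ∃ φ : Jet k 1 1, linPart φ ≠ 0 ∧ γ₁ = jetComp γ₂ φ := by
  obtain ⟨φ, rfl⟩ := test_curve_uniqueness_general hΨ hγ₂ h₁ h₂
  exact ⟨φ, fun hφ => hγ₁ (by rw [linPart_jetComp, hφ, Matrix.mul_zero]), rfl⟩

end JetPaper
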